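/- A real Banach space B with dual B* is reflexive if and only if for every nonempty, closed, and convex subset C of B and for every φ ∈ B*, the set π_C(φ) is nonempty. -/

import Mathlib

open Set Filter

noncomputable section

/-- The normalized duality map `J x = {φ : ⟨φ,x⟩ = ‖x‖² and ‖φ‖ = ‖x‖}`. -/
def dualityMap {B : Type*} [NormedAddCommGroup B] [NormedSpace ℝ B] (x : B) :
    Set (B →L[ℝ] ℝ) :=
  {φ | φ x = ‖x‖ ^ 2 ∧ ‖φ‖ = ‖x‖}

/-- The Lyapunov functional `V(φ,x) = ‖φ‖² - 2⟨φ,x⟩ + ‖x‖²`. -/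
def lyapV {B : Type*} [NormedAddCommGroup B] [NormedSpace ℝ B] (φ : B →L[ℝ] ℝ) (x : B) : ℝ :=
  ‖φ‖ ^ 2 - 2 * φ x + ‖x‖ ^ 2

/-- The generalized projection: the set of minimizers of `V(φ, ·)` over `C`. -/
def genProj {B : Type*} [NormedAddCommGroup B] [NormedSpace ℝ B] (C : Set B)
    (φ : B →L[ℝ] ℝ) : Set B :=
  {u | u ∈ C ∧ ∀ y ∈ C, lyapV φ u ≤ lyapV φ y}

/-- The generalized metric projection `Π_C x = ⋃_{jx ∈ J x} π_C (jx)`. -/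
def genMetricProj {B : Type*} [NormedAddCommGroup B] [NormedSpace ℝ B] (C : Set B) (x : B) :
    Set B :=
  ⋃ φ ∈ dualityMap x, genProj C φ

/-- The metric projection: the set of nearest points to `x` in `C`. -/
def metricProj {B : Type*} [NormedAddCommGroup B] [NormedSpace ℝ B] (C : Set B) (x : B) :
    Set B :=
  {u | u ∈ C ∧ ∀ y ∈ C, ‖x - u‖ ≤ ‖x - y‖}

/-- The set of generalized identical points of `x`. -/
def genIdentical {B : Type*} [NormedAddCommGroup B] [NormedSpace ℝ B] (x : B) : Set B :=
  {y | (dualityMap x ∩ dualityMap y).Nonempty}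

section Reflexivity

set_option maxSynthPendingDepth 3

variable {B : Type*} [NormedAddCommGroup B] [NormedSpace ℝ B]

open Topology

theorem lyapV_convexOn (φ : B →L[ℝ] ℝ) : ConvexOn ℝ univ (lyapV φ) := by
  have hnorm : ConvexOn ℝ univ (fun x : B => ‖x‖ ^ 2) :=
    (convexOn_norm convex_univ).pow (fun x _ => norm_nonneg x) 2
  have hlin : ConvexOn ℝ univ (fun x : B => ‖φ‖ ^ 2 + ((-2 : ℝ) • φ) x) :=
    (convexOn_const _ convex_univ).add (((-2 : ℝ) • φ).toLinearMap.convexOn convex_univ)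
  refine (hlin.add hnorm).congr fun x _ => ?_
  simp only [lyapV, Pi.add_apply, smul_apply, smul_eq_mul]
  ring

theorem continuous_lyapV (φ : B →L[ℝ] ℝ) : Continuous (lyapV φ) := by
  unfold lyapV
  fun_prop

theorem sq_norm_sub_norm_le_lyapV (φ : B →L[ℝ] ℝ) (x : B) :
    (‖x‖ - ‖φ‖) ^ 2 ≤ lyapV φ x := by
  have h : φ x ≤ ‖φ‖ * ‖x‖ := (le_abs_self _).trans (φ.le_opNorm x)
  unfold lyapV
  nlinarith

/-- A closed convex set contains the weak limits of the families eventually lying in it. -/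
theorem Convex.mem_of_forall_tendsto_dual {α : Type*} {l : Filter α} [l.NeBot] {s : Set B}
    (hconv : Convex ℝ s) (hclosed : IsClosed s) {x : α → B} {u : B}
    (hx : ∀ᶠ a in l, x a ∈ s)
    (hlim : ∀ f : B →L[ℝ] ℝ, Tendsto (fun a => f (x a)) l (𝓝 (f u))) : u ∈ s := by
  by_contra hu
  obtain ⟨f, c, hs, hc⟩ := geometric_hahn_banach_closed_point hconv hclosed hu
  exact hc.not_ge (le_of_tendsto (hlim f) (hx.mono fun a ha => (hs _ ha).le))

/-- In a reflexive space, bounded families converge weakly along ultrafilters. -/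
theorem exists_forall_tendsto_dual_of_bounded
    (hB : Function.Surjective ⇑(NormedSpace.inclusionInDoubleDual ℝ B))
    {α : Type*} (l : Ultrafilter α) {x : α → B} {R : ℝ} (hx : ∀ a, ‖x a‖ ≤ R) :
    ∃ u : B, ∀ f : B →L[ℝ] ℝ, Tendsto (fun a => f (x a)) l (𝓝 (f u)) := by
  let e : α → WeakDual ℝ (StrongDual ℝ B) := fun a =>
    StrongDual.toWeakDual (NormedSpace.inclusionInDoubleDual ℝ B (x a))
  have hmem : ∀ a, e a ∈ (WeakDual.toStrongDual ⁻¹' Metric.closedBall 0 R :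
      Set (WeakDual ℝ (StrongDual ℝ B))) := by
    intro a
    have : ‖NormedSpace.inclusionInDoubleDual ℝ B (x a)‖ ≤ R :=
      (NormedSpace.double_dual_bound ℝ B (x a)).trans (hx a)
    exact mem_closedBall_zero_iff.2 this
  obtain ⟨F, -, hF⟩ := (WeakDual.isCompact_closedBall (𝕜 := ℝ) (0 : StrongDual ℝ (StrongDual ℝ B))
    R).ultrafilter_le_nhds (l.map e) (by
      rw [le_principal_iff]
      exact Filter.mem_map.2 (univ_mem' hmem))
  obtain ⟨u, hu⟩ := hB (WeakDual.toStrongDual F)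
  refine ⟨u, fun f => ?_⟩
  have hev : Tendsto (fun G : WeakDual ℝ (StrongDual ℝ B) => G f) (𝓝 F) (𝓝 (F f)) :=
    (WeakDual.eval_continuous f).tendsto F
  have hFf : F f = f u := by
    have := congrArg (fun G : StrongDual ℝ (StrongDual ℝ B) => G f) hu
    simpa using this.symm
  rw [← hFf]
  exact hev.comp hF

theorem genProj_nonempty_of_reflexive
    (hB : Function.Surjective ⇑(NormedSpace.inclusionInDoubleDual ℝ B)) {C : Set B}
    (hne : C.Nonempty) (hclosed : IsClosed C) (hconv : Convex ℝ C) (φ : B →L[ℝ] ℝ) :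
    (genProj C φ).Nonempty := by
  have hbdd : BddBelow (lyapV φ '' C) := by
    refine ⟨0, ?_⟩
    rintro _ ⟨x, -, rfl⟩
    exact (sq_nonneg _).trans (sq_norm_sub_norm_le_lyapV φ x)
  set m := sInf (lyapV φ '' C) with hm
  have happrox : ∀ n : ℕ, ∃ x ∈ C, lyapV φ x < m + 1 / ((n : ℝ) + 1) := by
    intro n
    obtain ⟨_, ⟨x, hx, rfl⟩, hlt⟩ := exists_lt_of_csInf_lt (hne.image (lyapV φ))
      (show sInf (lyapV φ '' C) < m + 1 / ((n : ℝ) + 1) by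
        rw [← hm]; linarith [Nat.one_div_pos_of_nat (α := ℝ) (n := n)])
    exact ⟨x, hx, hlt⟩
  choose x hxC hxm using happrox
  have hxbound : ∀ n, ‖x n‖ ≤ ‖φ‖ + (|m| + 2) := by
    intro n
    have h1 := sq_norm_sub_norm_le_lyapV φ (x n)
    have h2 : 1 / ((n : ℝ) + 1) ≤ 1 := by
      rw [div_le_one (by positivity)]
      linarith [n.cast_nonneg (α := ℝ)]
    have h3 := hxm n
    have h4 := le_abs_self m
    have h5 := abs_nonneg m
    by_contra! h
    nlinarith
  obtain ⟨u, hu⟩ := exists_forall_tendsto_dual_of_bounded hB (hyperfilter ℕ) hxbound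
  have hlevel : ∀ ε > 0, u ∈ C ∧ lyapV φ u ≤ m + ε := by
    intro ε hε
    have hs : IsClosed {y | y ∈ C ∧ lyapV φ y ≤ m + ε} :=
      hclosed.inter (isClosed_le (continuous_lyapV φ) continuous_const)
    have hev : ∀ᶠ n : ℕ in hyperfilter ℕ, x n ∈ {y | y ∈ C ∧ lyapV φ y ≤ m + ε} := by
      have h0 := (tendsto_one_div_add_atTop_nhds_zero_nat (𝕜 := ℝ)).eventually_lt_const hε
      refine Nat.hyperfilter_le_atTop (h0.mono fun n hn => ?_)
      exact ⟨hxC n, by linarith [hxm n]⟩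
    exact (((lyapV_convexOn φ).subset (subset_univ C) hconv).convex_le
      (m + ε)).mem_of_forall_tendsto_dual hs hev hu
  refine ⟨u, (hlevel 1 one_pos).1, fun y hy => ?_⟩
  exact (le_of_forall_pos_le_add fun ε hε => (hlevel ε hε).2).trans
    (csInf_le hbdd (mem_image_of_mem _ hy))

/-- An approximate form of Helly's theorem: an element of the double dual agrees, up to `ε` on
finitely many functionals, with a point obeying the same norm bound. -/
theorem exists_norm_le_forall_abs_sub_lt {ι : Type*} [Fintype ι] (f : ι → StrongDual ℝ B)
    {F : StrongDual ℝ (StrongDual ℝ B)} {R : ℝ} (hF : ‖F‖ ≤ R) {ε : ℝ} (hε : 0 < ε) :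
    ∃ x : B, ‖x‖ ≤ R ∧ ∀ i, |f i x - F (f i)| < ε := by
  classical
  have hR : 0 ≤ R := (norm_nonneg F).trans hF
  let T : B →L[ℝ] (ι → ℝ) := ContinuousLinearMap.pi f
  have hmem : (fun i => F (f i)) ∈ closure (T '' Metric.closedBall 0 R) := by
    by_contra hc
    obtain ⟨a, u, hs, hu⟩ := geometric_hahn_banach_closed_point
      ((convex_closedBall (0 : B) R).linear_image T.toLinearMap).closure isClosed_closure hc
    have ha : ∀ v : ι → ℝ, a v = ∑ i, v i * a (Pi.single i 1) := by
      intro v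
      conv_lhs => rw [pi_eq_sum_univ' v]
      simp [map_sum]
    let ψ : StrongDual ℝ B := ∑ i, a (Pi.single i 1) • f i
    have hψ : ∀ x, ψ x = a (T x) := by
      intro x
      rw [ha]
      simp [ψ, T, mul_comm]
    have hFψ : F ψ = a (fun i => F (f i)) := by
      rw [ha]
      simp [ψ, mul_comm]
    have hball : ∀ x, ‖x‖ ≤ R → ψ x < u := by
      intro x hx
      rw [hψ]
      exact hs _ (subset_closure ⟨x, by simpa using hx, rfl⟩)
    have hupos : 0 < u := by simpa using hball 0 (by simpa using hR)
    have hle : ‖(R • ψ)‖ ≤ u := by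
      refine ContinuousLinearMap.opNorm_le_of_unit_norm hupos.le fun x hx => ?_
      have h1 := hball (R • x) (by simp [norm_smul, hx, abs_of_nonneg hR])
      have h2 := hball (-(R • x)) (by simp [norm_smul, hx, abs_of_nonneg hR])
      simp only [map_neg, map_smul] at h1 h2
      rw [smul_apply, Real.norm_eq_abs, abs_le]
      constructor <;> linarith
    rw [norm_smul, Real.norm_of_nonneg hR] at hle
    have := (le_abs_self _).trans (F.le_of_opNorm_le hF ψ)
    linarith
  obtain ⟨_, ⟨x, hx, rfl⟩, hdist⟩ := Metric.mem_closure_iff.1 hmem ε hε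
  refine ⟨x, by simpa using hx, fun i => ?_⟩
  have := (dist_le_pi_dist _ _ i).trans_lt hdist
  rwa [dist_comm, Real.dist_eq] at this

/-- If `F` is at distance more than `θ` from the canonical image of `B`, then some functional in
the unit ball kills finitely many prescribed points while `F` takes the value `θ` on it. -/
theorem exists_dual_vanishing_of_lt_dist {ι : Type*} [Finite ι] (x : ι → B)
    (F : StrongDual ℝ (StrongDual ℝ B)) {θ : ℝ} (hθ : 0 < θ)
    (hF : ∀ z : B, θ < ‖F - NormedSpace.inclusionInDoubleDual ℝ B z‖) :
    ∃ f : StrongDual ℝ B, ‖f‖ ≤ 1 ∧ F f = θ ∧ ∀ i, f (x i) = 0 := by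
  let J := NormedSpace.inclusionInDoubleDual ℝ B
  let N : Submodule ℝ (StrongDual ℝ B) := ⨅ i, (J (x i)).toLinearMap.ker
  have hN : ∀ f, f ∈ N ↔ ∀ i, f (x i) = 0 := by
    intro f
    simp [N, J, Submodule.mem_iInf]
  let F₀ : StrongDual ℝ N := F.comp N.subtypeL
  obtain ⟨G, hGN, hGnorm⟩ := exists_extension_norm_eq N F₀
  have hspan : (F - G).toLinearMap ∈
      Submodule.span ℝ (range fun i => (J (x i)).toLinearMap) := by
    refine mem_span_of_iInf_ker_le_ker fun f hf => ?_
    have hGf : G f = F f := hGN ⟨f, hf⟩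
    simp [hGf]
  have hrange : ∃ z : B, J z = F - G := by
    have hle : Submodule.span ℝ (range fun i => (J (x i)).toLinearMap) ≤
        ((ContinuousLinearMap.coeLM ℝ).comp J.toLinearMap).range := by
      rw [Submodule.span_le]
      rintro _ ⟨i, rfl⟩
      exact ⟨x i, rfl⟩
    obtain ⟨z, hz⟩ := hle hspan
    exact ⟨z, ContinuousLinearMap.coe_injective hz⟩
  obtain ⟨z, hz⟩ := hrange
  have hG : θ < ‖F₀‖ := by
    have := hF z
    rwa [show F - NormedSpace.inclusionInDoubleDual ℝ B z = G from
      (congrArg (F - ·) hz).trans (sub_sub_cancel F G), hGnorm] at this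
  obtain ⟨f, hf⟩ : ∃ f : N, θ * ‖f‖ < ‖F₀ f‖ := by
    by_contra! h
    exact hG.not_ge (ContinuousLinearMap.opNorm_le_bound _ hθ.le h)
  have hf' : θ * ‖(f : StrongDual ℝ B)‖ < |F f| := hf
  have hpos : 0 < |F f| := lt_of_le_of_lt (by positivity) hf'
  refine ⟨(θ / F f) • (f : StrongDual ℝ B), ?_, ?_, fun i => ?_⟩
  · rw [norm_smul, Real.norm_eq_abs, abs_div, abs_of_pos hθ, div_mul_eq_mul_div, div_le_one hpos]
    exact hf'.le
  · rw [map_smul, smul_eq_mul, div_mul_cancel₀ _ (abs_pos.1 hpos)]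
  · simp [(hN f).1 f.2 i]

/-- James' biorthogonal-type sequences in a nonreflexive Banach space. -/
theorem exists_james_seq_of_not_reflexive [CompleteSpace B]
    (hB : ¬ Function.Surjective ⇑(NormedSpace.inclusionInDoubleDual ℝ B)) :
    ∃ (δ R : ℝ) (f : ℕ → StrongDual ℝ B) (x : ℕ → B), 0 < δ ∧ 0 < R ∧ (∀ n, ‖f n‖ ≤ 1) ∧
      (∀ n, ‖x n‖ ≤ R) ∧ (∀ m n, m < n → f n (x m) = 0) ∧ ∀ m n, m ≤ n → δ ≤ f m (x n) := by
  obtain ⟨F, hF⟩ := not_forall.1 hB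
  have hisom : Isometry (NormedSpace.inclusionInDoubleDual ℝ B) :=
    (NormedSpace.inclusionInDoubleDualLi ℝ (E := B)).isometry
  have hclosed : IsClosed (range (NormedSpace.inclusionInDoubleDual ℝ B)) :=
    hisom.isClosedEmbedding.isClosed_range
  obtain ⟨r, hr, hball⟩ := Metric.isOpen_iff.1 hclosed.isOpen_compl F hF
  have hdist : ∀ z : B, r / 2 < ‖F - NormedSpace.inclusionInDoubleDual ℝ B z‖ := by
    intro z
    by_contra! h
    refine hball (?_ : NormedSpace.inclusionInDoubleDual ℝ B z ∈ Metric.ball F r) ⟨z, rfl⟩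
    rw [Metric.mem_ball, dist_comm, dist_eq_norm]
    linarith
  obtain ⟨p, hp, hrel⟩ := exists_seq_of_forall_finset_exists
    (α := StrongDual ℝ B × B)
    (fun p => ‖p.1‖ ≤ 1 ∧ F p.1 = r / 2 ∧ ‖p.2‖ ≤ ‖F‖ ∧ r / 4 ≤ p.1 p.2)
    (fun p q => q.1 p.2 = 0 ∧ r / 4 ≤ p.1 q.2) (by
      intro s hs
      obtain ⟨f, hf1, hfF, hf0⟩ :=
        exists_dual_vanishing_of_lt_dist (fun q : s => q.1.2) F (half_pos hr) hdist
      obtain ⟨y, hy, hyf⟩ := exists_norm_le_forall_abs_sub_lt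
        (fun o : Option s => o.elim f fun q => q.1.1) le_rfl (show 0 < r / 4 by linarith)
      refine ⟨(f, y), ⟨hf1, hfF, hy, ?_⟩, fun q hq => ⟨hf0 ⟨q, hq⟩, ?_⟩⟩
      · have := (abs_lt.1 (hyf none)).1
        simp only [Option.elim, hfF] at this
        linarith
      · have := (abs_lt.1 (hyf (some ⟨q, hq⟩))).1
        simp only [Option.elim, (hs q hq).2.1] at this
        linarith)
  refine ⟨r / 4, ‖F‖ + 1, fun n => (p n).1, fun n => (p n).2, by linarith, by positivity,
    fun n => (hp n).1, fun n => (hp n).2.2.1.trans (by linarith),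
    fun m n h => (hrel m n h).1, fun m n h => ?_⟩
  rcases h.eq_or_lt with rfl | h
  · exact (hp m).2.2.2
  · exact (hrel m n h).2

/-- A decreasing sequence of convex sets in the dual unit ball, bounded away from `0` in norm but
converging pointwise to `0`, produces a functional that does not attain its norm. -/
theorem exists_dual_lt_norm_of_antitone {K : ℕ → Set (StrongDual ℝ B)} (hanti : Antitone K)
    (hconv : ∀ n, Convex ℝ (K n)) (hne : ∀ n, (K n).Nonempty)
    (hone : ∀ n, ∀ g ∈ K n, ‖g‖ ≤ 1) {θ : ℝ} (hθ : 0 < θ) (hlow : ∀ g ∈ K 0, θ ≤ ‖g‖)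
    (hzero : ∀ x : B, ∀ δ > 0, ∃ n, ∀ g ∈ K n, |g x| ≤ δ) :
    ∃ h : StrongDual ℝ B, h ≠ 0 ∧ ∀ x, ‖x‖ ≤ 1 → h x < ‖h‖ := by
  have hchoice : ∀ (n : ℕ) (S : StrongDual ℝ B), ∃ g ∈ K n, ∀ k ∈ K n,
      ‖S + (1 / 2 : ℝ) ^ n • g‖ ≤ ‖S + (1 / 2 : ℝ) ^ n • k‖ + θ / 4 * (1 / 4) ^ n := by
    intro n S
    have hbdd : BddBelow ((fun g => ‖S + (1 / 2 : ℝ) ^ n • g‖) '' K n) :=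
      ⟨0, by rintro _ ⟨g, -, rfl⟩; positivity⟩
    obtain ⟨_, ⟨g, hg, rfl⟩, hlt⟩ := exists_lt_of_csInf_lt
      ((hne n).image fun g => ‖S + (1 / 2 : ℝ) ^ n • g‖)
      (lt_add_of_pos_right _ (show 0 < θ / 4 * (1 / 4) ^ n by positivity))
    exact ⟨g, hg, fun k hk => hlt.le.trans
      (add_le_add_left (csInf_le hbdd (mem_image_of_mem _ hk)) _)⟩
  choose c hcK hcmin using hchoice
  let S : ℕ → StrongDual ℝ B := fun n =>
    Nat.rec 0 (fun n s => s + (1 / 2 : ℝ) ^ (n + 1) • c n s) n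
  have hS0 : S 0 = 0 := rfl
  have hSsucc : ∀ n, S (n + 1) = S n + (1 / 2 : ℝ) ^ (n + 1) • c n (S n) := fun n => rfl
  let T : ℕ → StrongDual ℝ B := fun n => S n + (1 / 2 : ℝ) ^ n • c n (S n)
  have hstep : ∀ d n, ∀ g ∈ K (n + d), ∃ k ∈ K n,
      S (n + d) + (1 / 2 : ℝ) ^ (n + d) • g = S n + (1 / 2 : ℝ) ^ n • k := by
    intro d
    induction d with
    | zero => exact fun n g hg => ⟨g, hg, rfl⟩
    | succ d ih =>
      intro n g hg
      have hmem : (1 / 2 : ℝ) • c (n + d) (S (n + d)) + (1 / 2 : ℝ) • g ∈ K (n + d) :=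
        hconv _ (hcK _ _) (hanti (Nat.le_succ _) hg) (by norm_num) (by norm_num) (by norm_num)
      obtain ⟨k, hk, heq⟩ := ih n _ hmem
      refine ⟨k, hk, heq ▸ ?_⟩
      rw [← add_assoc, hSsucc, smul_add, smul_smul, smul_smul, pow_succ, add_assoc]
  have hcauchy : CauchySeq S := by
    refine cauchySeq_of_le_geometric_two (C := 1) fun n => ?_
    rw [hSsucc, dist_self_add_right, norm_smul, Real.norm_of_nonneg (by positivity)]
    calc (1 / 2 : ℝ) ^ (n + 1) * ‖c n (S n)‖ ≤ (1 / 2 : ℝ) ^ (n + 1) * 1 := by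
          gcongr
          exact hone n _ (hcK _ _)
      _ = 1 / 2 / 2 ^ n := by rw [pow_succ, one_div_pow]; ring
  obtain ⟨h, hSh⟩ := cauchySeq_tendsto_of_complete hcauchy
  have hTh : Tendsto T atTop (𝓝 h) := by
    have hsmall : Tendsto (fun n => (1 / 2 : ℝ) ^ n • c n (S n)) atTop (𝓝 0) := by
      refine squeeze_zero_norm (a := fun n => (1 / 2 : ℝ) ^ n) (fun n => ?_)
        (tendsto_pow_atTop_nhds_zero_of_lt_one (by norm_num) (by norm_num))
      rw [norm_smul, Real.norm_of_nonneg (by positivity)]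
      exact mul_le_of_le_one_right (by positivity) (hone n _ (hcK _ _))
    simpa only [add_zero] using hSh.add hsmall
  have hTform : ∀ n, ∀ᶠ m in atTop, ∃ k ∈ K n, T m = S n + (1 / 2 : ℝ) ^ n • k := by
    intro n
    filter_upwards [eventually_ge_atTop n] with m hm
    obtain ⟨d, rfl⟩ := Nat.exists_eq_add_of_le hm
    exact hstep d n _ (hcK _ _)
  have hTle : ∀ n, ‖T n‖ ≤ ‖h‖ + θ / 4 * (1 / 4) ^ n := by
    intro n
    refine ge_of_tendsto (hTh.norm.add_const _) ((hTform n).mono ?_)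
    rintro m ⟨k, hk, hTm⟩
    rw [hTm]
    exact hcmin n _ k hk
  have hθh : θ ≤ ‖h‖ := by
    refine ge_of_tendsto hTh.norm ((hTform 0).mono ?_)
    rintro m ⟨k, hk, hTm⟩
    rw [hTm]
    simpa [hS0] using hlow k hk
  have hSle : ∀ n, ‖S n‖ ≤ ‖h‖ - θ / 2 * (1 / 2) ^ n - θ / 2 * (1 / 4) ^ n := by
    intro n
    induction n with
    | zero => simpa [hS0] using by linarith
    | succ n ih =>
      have heq : S (n + 1) = (1 / 2 : ℝ) • T n + (1 / 2 : ℝ) • S n := by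
        rw [hSsucc]
        simp only [T]
        module
      have hnorm : ‖S (n + 1)‖ ≤ 1 / 2 * ‖T n‖ + 1 / 2 * ‖S n‖ := by
        rw [heq]
        refine (norm_add_le _ _).trans_eq ?_
        rw [norm_smul, norm_smul, Real.norm_of_nonneg (by norm_num)]
      have := hTle n
      rw [pow_succ, pow_succ]
      linarith
  refine ⟨h, norm_pos_iff.1 (hθ.trans_le hθh), fun x hx => ?_⟩
  obtain ⟨n, hn⟩ := hzero x (θ / 2) (by positivity)
  have htail : h x ≤ S n x + (1 / 2) ^ n * (θ / 2) := by
    have hlim : Tendsto (fun m => T m x) atTop (𝓝 (h x)) :=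
      ((ContinuousLinearMap.apply ℝ ℝ x).continuous.tendsto h).comp hTh
    refine le_of_tendsto hlim ((hTform n).mono ?_)
    rintro m ⟨k, hk, hTm⟩
    rw [hTm, add_apply, smul_apply, smul_eq_mul]
    gcongr
    exact (le_abs_self _).trans (hn k hk)
  have hSx : S n x ≤ ‖S n‖ :=
    (le_abs_self _).trans (((S n).le_opNorm x).trans
      (mul_le_of_le_one_right (norm_nonneg _) hx))
  have := hSle n
  have : 0 < θ / 2 * (1 / 4 : ℝ) ^ n := by positivity
  linarith

/-- A nonreflexive Banach space has a closed subspace carrying a functional that does not attain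
its norm. -/
theorem exists_closed_submodule_dual_lt_norm [CompleteSpace B]
    (hB : ¬ Function.Surjective ⇑(NormedSpace.inclusionInDoubleDual ℝ B)) :
    ∃ Z : Submodule ℝ B, IsClosed (Z : Set B) ∧
      ∃ h : StrongDual ℝ Z, h ≠ 0 ∧ ∀ z, ‖z‖ ≤ 1 → h z < ‖h‖ := by
  obtain ⟨δ, R, f, x, hδ, hR, hf, hx, hvanish, hbig⟩ := exists_james_seq_of_not_reflexive hB
  let Z : Submodule ℝ B := (Submodule.span ℝ (range x)).topologicalClosure
  have hxZ : ∀ n, x n ∈ Z := fun n =>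
    Submodule.le_topologicalClosure _ (Submodule.subset_span ⟨n, rfl⟩)
  have hspan : ∀ y ∈ Submodule.span ℝ (range x), ∀ᶠ n in atTop, f n y = 0 := by
    intro y hy
    induction hy using Submodule.span_induction with
    | mem y hy =>
      obtain ⟨m, rfl⟩ := hy
      filter_upwards [eventually_gt_atTop m] with n hn using hvanish m n hn
    | zero => simp
    | add y z _ _ hy hz =>
      filter_upwards [hy, hz] with n h1 h2
      simp [h1, h2]
    | smul a y _ hy =>
      filter_upwards [hy] with n h1
      simp [h1]
  have hpt : ∀ z ∈ Z, ∀ ε > 0, ∃ N, ∀ n ≥ N, |f n z| ≤ ε := by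
    intro z hz ε hε
    obtain ⟨y, hy, hzy⟩ := Metric.mem_closure_iff.1 hz ε hε
    obtain ⟨N, hN⟩ := eventually_atTop.1 (hspan y hy)
    refine ⟨N, fun n hn => ?_⟩
    have h1 : f n z = f n (z - y) := by rw [map_sub, hN n hn, sub_zero]
    rw [h1, ← Real.norm_eq_abs]
    calc ‖f n (z - y)‖ ≤ 1 * ‖z - y‖ := (f n).le_of_opNorm_le (hf n) _
      _ ≤ ε := by rw [one_mul, ← dist_eq_norm]; exact hzy.le
  let g : ℕ → StrongDual ℝ Z := fun n => (f n).comp Z.subtypeL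
  have hone : ∀ n, ∀ k ∈ convexHull ℝ (g '' Ici n), ‖k‖ ≤ 1 := by
    intro n k hk
    have hsub : convexHull ℝ (g '' Ici n) ⊆ Metric.closedBall 0 1 := by
      refine convexHull_min ?_ (convex_closedBall _ _)
      rintro _ ⟨m, -, rfl⟩
      rw [mem_closedBall_zero_iff]
      refine ContinuousLinearMap.opNorm_le_bound _ zero_le_one fun z => ?_
      exact (f m).le_of_opNorm_le (hf m) z
    simpa using hsub hk
  have hlow : ∀ k ∈ convexHull ℝ (g '' Ici 0), δ / R ≤ ‖k‖ := by
    intro k hk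
    have hsub : convexHull ℝ (g '' Ici 0) ⊆
        {k | ∀ᶠ n in atTop, δ ≤ k ⟨x n, hxZ n⟩} := by
      refine convexHull_min ?_ ?_
      · rintro _ ⟨m, -, rfl⟩
        filter_upwards [eventually_ge_atTop m] with n hn using hbig m n hn
      · intro k hk l hl a b ha hb hab
        filter_upwards [hk, hl] with n h1 h2
        simp only [add_apply, smul_apply, smul_eq_mul]
        calc δ = a * δ + b * δ := by rw [← add_mul, hab, one_mul]
          _ ≤ _ := by gcongr
    obtain ⟨n, hn⟩ := Eventually.exists (hsub hk)
    rw [div_le_iff₀ hR]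
    calc δ ≤ k ⟨x n, hxZ n⟩ := hn
      _ ≤ ‖k‖ * ‖x n‖ := (le_abs_self _).trans (k.le_opNorm _)
      _ ≤ ‖k‖ * R := by gcongr; exact hx n
  have hzero : ∀ z : Z, ∀ ε > 0, ∃ n, ∀ k ∈ convexHull ℝ (g '' Ici n), |k z| ≤ ε := by
    intro z ε hε
    obtain ⟨N, hN⟩ := hpt z z.2 ε hε
    refine ⟨N, fun k hk => ?_⟩
    have hsub : convexHull ℝ (g '' Ici N) ⊆ (fun k : StrongDual ℝ Z => k z) ⁻¹' Icc (-ε) ε := by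
      refine convexHull_min ?_ ?_
      · rintro _ ⟨m, hm, rfl⟩
        exact abs_le.1 (hN m hm)
      · exact (convex_Icc (-ε) ε).linear_preimage (ContinuousLinearMap.apply ℝ ℝ z).toLinearMap
    exact abs_le.2 (hsub hk)
  exact ⟨Z, Submodule.isClosed_topologicalClosure _,
    exists_dual_lt_norm_of_antitone
      (fun m n hmn => convexHull_mono (image_mono (Ici_subset_Ici.2 hmn)))
      (fun n => convex_convexHull ℝ (g '' Ici n))
      (fun n => ⟨g n, subset_convexHull ℝ _ ⟨n, self_mem_Ici, rfl⟩⟩)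
      hone (div_pos hδ hR) hlow hzero⟩

theorem reflexive_of_genProj_zero_nonempty [CompleteSpace B]
    (hproj : ∀ C : Set B, C.Nonempty → IsClosed C → Convex ℝ C → (genProj C 0).Nonempty) :
    Function.Surjective ⇑(NormedSpace.inclusionInDoubleDual ℝ B) := by
  by_contra hB
  obtain ⟨Z, hZ, h, hne, hlt⟩ := exists_closed_submodule_dual_lt_norm hB
  obtain ⟨v, hv⟩ : ∃ v, h v ≠ 0 := by
    by_contra! h0
    exact hne (ContinuousLinearMap.ext h0)
  obtain ⟨_, ⟨z, hz, rfl⟩, hmin⟩ := hproj (Z.subtypeL '' {z | h z = 1})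
    ⟨_, (h v)⁻¹ • v, by simp [hv], rfl⟩
    (hZ.isClosedEmbedding_subtypeVal.isClosedMap _ (isClosed_eq h.continuous continuous_const))
    (((convex_singleton (1 : ℝ)).linear_preimage h.toLinearMap).linear_image Z.subtypeL.toLinearMap)
  have hz1 : h z = 1 := hz
  have hz0 : 0 < ‖z‖ := norm_pos_iff.2 (by rintro rfl; simp at hz1)
  have hzmin : ∀ w, h w = 1 → ‖z‖ ≤ ‖w‖ := by
    intro w hw
    have := hmin _ ⟨w, hw, rfl⟩
    simp only [lyapV, norm_zero, zero_apply] at this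
    exact le_of_sq_le_sq (by simpa using this) (norm_nonneg _)
  have hle : ‖h‖ ≤ ‖z‖⁻¹ := by
    refine ContinuousLinearMap.opNorm_le_bound _ (by positivity) fun w => ?_
    rcases eq_or_ne (h w) 0 with h0 | h0
    · rw [h0, norm_zero]
      positivity
    · have := hzmin ((h w)⁻¹ • w) (by simp [h0])
      rw [norm_smul, norm_inv, ← div_eq_inv_mul, le_div_iff₀ (norm_pos_iff.2 h0)] at this
      rwa [← div_eq_inv_mul, le_div_iff₀ hz0, mul_comm]
  refine (hlt (‖z‖⁻¹ • z) ?_).not_ge ?_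
  · rw [norm_smul, norm_inv, norm_norm, inv_mul_cancel₀ hz0.ne']
  · simpa [hz1] using hle

end Reflexivity

/-- A Banach space is reflexive iff the canonical embedding into the double dual is onto. -/
theorem statement_4 {B : Type*} [NormedAddCommGroup B] [NormedSpace ℝ B] [CompleteSpace B] :
    Function.Surjective ⇑(NormedSpace.inclusionInDoubleDual ℝ B) ↔
      ∀ C : Set B, C.Nonempty → IsClosed C → Convex ℝ C →
        ∀ φ : B →L[ℝ] ℝ, (genProj C φ).Nonempty :=
  ⟨fun hB _ hne hclosed hconv φ => genProj_nonempty_of_reflexive hB hne hclosed hconv φ,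
    fun h => reflexive_of_genProj_zero_nonempty fun C hne hclosed hconv => h C hne hclosed hconv 0⟩
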